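/- Let a, b ∈ ℂ with a ∉ ℤ or a = 0. Then the 𝔤-module R_{a,b} is not simple if and only if a = 0 and b = 1, or a = 0 and b = 1/2. -/

import Mathlib

open Submodule

/-- A module over the `N = 2` Ramond algebra `𝔤`: a `ℤ/2`-graded complex vector
space `V = even ⊕ odd` with parity-preserving operators `L m`, `H m`,
parity-reversing operators `Gp m` (`G_m^+`), `Gm m` (`G_m^-`), and a scalar `c₀`
(the action of the central element `C`), subject to the defining relations. -/
structure RamondRep (V : Type) [AddCommGroup V] [Module ℂ V] : Type where
  L : ℤ → V →ₗ[ℂ] V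
  H : ℤ → V →ₗ[ℂ] V
  Gp : ℤ → V →ₗ[ℂ] V
  Gm : ℤ → V →ₗ[ℂ] V
  c₀ : ℂ
  even : Submodule ℂ V
  odd : Submodule ℂ V
  grading : IsCompl even odd
  L_even : ∀ (m : ℤ), ∀ v ∈ even, L m v ∈ even
  L_odd : ∀ (m : ℤ), ∀ v ∈ odd, L m v ∈ odd
  H_even : ∀ (m : ℤ), ∀ v ∈ even, H m v ∈ even
  H_odd : ∀ (m : ℤ), ∀ v ∈ odd, H m v ∈ odd
  Gp_even : ∀ (m : ℤ), ∀ v ∈ even, Gp m v ∈ odd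
  Gp_odd : ∀ (m : ℤ), ∀ v ∈ odd, Gp m v ∈ even
  Gm_even : ∀ (m : ℤ), ∀ v ∈ even, Gm m v ∈ odd
  Gm_odd : ∀ (m : ℤ), ∀ v ∈ odd, Gm m v ∈ even
  rel_LL : ∀ (m n : ℤ) (v : V),
    L m (L n v) - L n (L m v) =
      ((n : ℂ) - (m : ℂ)) • L (m + n) v +
        ((1 / 12 : ℂ) * ((n : ℂ) ^ 3 - (n : ℂ)) *
          (if m + n = 0 then (1 : ℂ) else 0) * c₀) • v
  rel_HH : ∀ (m n : ℤ) (v : V),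
    H m (H n v) - H n (H m v) =
      ((1 / 3 : ℂ) * (m : ℂ) * (if m + n = 0 then (1 : ℂ) else 0) * c₀) • v
  rel_LH : ∀ (m n : ℤ) (v : V),
    L m (H n v) - H n (L m v) = (n : ℂ) • H (m + n) v
  rel_LGp : ∀ (m p : ℤ) (v : V),
    L m (Gp p v) - Gp p (L m v) = ((p : ℂ) - (m : ℂ) / 2) • Gp (p + m) v
  rel_LGm : ∀ (m p : ℤ) (v : V),
    L m (Gm p v) - Gm p (L m v) = ((p : ℂ) - (m : ℂ) / 2) • Gm (p + m) v
  rel_HGp : ∀ (m p : ℤ) (v : V),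
    H m (Gp p v) - Gp p (H m v) = Gp (m + p) v
  rel_HGm : ∀ (m p : ℤ) (v : V),
    H m (Gm p v) - Gm p (H m v) = -(Gm (m + p) v)
  rel_GpGm : ∀ (p q : ℤ) (v : V),
    Gp p (Gm q v) + Gm q (Gp p v) =
      (-2 : ℂ) • L (p + q) v + ((p : ℂ) - (q : ℂ)) • H (p + q) v +
        ((1 / 3 : ℂ) * ((p : ℂ) ^ 2 - 1 / 4) *
          (if p + q = 0 then (1 : ℂ) else 0) * c₀) • v
  rel_GpGp : ∀ (p q : ℤ) (v : V), Gp p (Gp q v) + Gp q (Gp p v) = 0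
  rel_GmGm : ∀ (p q : ℤ) (v : V), Gm p (Gm q v) + Gm q (Gm p v) = 0

namespace RamondRep

variable {V : Type} [AddCommGroup V] [Module ℂ V]

/-- The weight space `V_μ = {v ∈ V : L₀ v = μ v}`. -/
def wt (ρ : RamondRep V) (μ : ℂ) : Submodule ℂ V :=
  Module.End.eigenspace (ρ.L 0) μ

/-- The parity components, indexed by `ZMod 2`. -/
def parity (ρ : RamondRep V) (τ : ZMod 2) : Submodule ℂ V :=
  if τ = 0 then ρ.even else ρ.odd

/-- `V` is a weight module: it is the sum of its weight spaces. -/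
def IsWeight (ρ : RamondRep V) : Prop := (⨆ μ : ℂ, ρ.wt μ) = ⊤

/-- `V` is cuspidal: a weight module with uniformly bounded weight multiplicities
in each parity. -/
def Cuspidal (ρ : RamondRep V) : Prop :=
  ρ.IsWeight ∧ ∃ p : ℕ, ∀ (μ : ℂ) (τ : ZMod 2),
    Module.rank ℂ ↥(ρ.wt μ ⊓ ρ.parity τ) ≤ (p : Cardinal)

/-- A subspace invariant under all the operators. -/
def IsSubmod (ρ : RamondRep V) (W : Submodule ℂ V) : Prop :=
  (∀ (m : ℤ), ∀ v ∈ W, ρ.L m v ∈ W) ∧ (∀ (m : ℤ), ∀ v ∈ W, ρ.H m v ∈ W) ∧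
    (∀ (m : ℤ), ∀ v ∈ W, ρ.Gp m v ∈ W) ∧ (∀ (m : ℤ), ∀ v ∈ W, ρ.Gm m v ∈ W)

/-- A graded subspace invariant under all the operators. -/
def IsGradedSubmod (ρ : RamondRep V) (W : Submodule ℂ V) : Prop :=
  ρ.IsSubmod W ∧ W = (W ⊓ ρ.even) ⊔ (W ⊓ ρ.odd)

/-- The trivial representation: all operators act by zero. -/
def IsTrivialRep (ρ : RamondRep V) : Prop :=
  ∀ (m : ℤ) (v : V), ρ.L m v = 0 ∧ ρ.H m v = 0 ∧ ρ.Gp m v = 0 ∧ ρ.Gm m v = 0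

/-- `V` is simple: nontrivial, and its only graded submodules are `⊥` and `⊤`. -/
def IsSimple (ρ : RamondRep V) : Prop :=
  ¬ ρ.IsTrivialRep ∧
    ∀ W : Submodule ℂ V, ρ.IsGradedSubmod W → W = ⊥ ∨ W = ⊤

/-- `V` is generated by `v` as a `𝔤`-module. -/
def GeneratedBy (ρ : RamondRep V) (v : V) : Prop :=
  ∀ W : Submodule ℂ V, ρ.IsSubmod W → v ∈ W → W = ⊤

/-- `V` is a highest weight module. -/
def IsHighestWeight (ρ : RamondRep V) : Prop :=
  ∃ v : V, v ≠ 0 ∧ ρ.GeneratedBy v ∧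
    (∃ h h' : ℂ, ρ.L 0 v = h • v ∧ ρ.H 0 v = h' • v) ∧
    (∀ m : ℤ, 0 < m → ρ.L m v = 0 ∧ ρ.H m v = 0 ∧ ρ.Gp m v = 0 ∧ ρ.Gm m v = 0) ∧
    ρ.Gp 0 v = 0

/-- `V` is a lowest weight module. -/
def IsLowestWeight (ρ : RamondRep V) : Prop :=
  ∃ v : V, v ≠ 0 ∧ ρ.GeneratedBy v ∧
    (∃ h h' : ℂ, ρ.L 0 v = h • v ∧ ρ.H 0 v = h' • v) ∧
    (∀ m : ℤ, m < 0 → ρ.L m v = 0 ∧ ρ.H m v = 0 ∧ ρ.Gp m v = 0 ∧ ρ.Gm m v = 0) ∧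
    ρ.Gm 0 v = 0

end RamondRep

/-- The family `(vp i)ᵢ` (even) and `(vm i)ᵢ` (odd) realizes the `𝔤`-module
`R_{a,b}` inside `(W, σ)`: the `vp i, vm i` form a basis, span the even/odd
parts respectively, `c₀ = 0`, and the action is given by the `R_{a,b}` formulas. -/
def RamondRep.IsRab {W : Type} [AddCommGroup W] [Module ℂ W] (σ : RamondRep W)
    (vp vm : ℤ → W) (a b : ℂ) : Prop :=
  σ.c₀ = 0 ∧
  LinearIndependent ℂ (fun x : Bool × ℤ => if x.1 then vm x.2 else vp x.2) ∧
  Submodule.span ℂ (Set.range vp ∪ Set.range vm) = ⊤ ∧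
  σ.even = Submodule.span ℂ (Set.range vp) ∧
  σ.odd = Submodule.span ℂ (Set.range vm) ∧
  (∀ m i : ℤ, σ.L m (vp i) = (a + (i : ℂ) + b * (m : ℂ)) • vp (m + i)) ∧
  (∀ m i : ℤ, σ.L m (vm i) = (a + (i : ℂ) + (b - 1 / 2) * (m : ℂ)) • vm (m + i)) ∧
  (∀ m i : ℤ, σ.H m (vp i) = (2 - 2 * b) • vp (m + i)) ∧
  (∀ m i : ℤ, σ.H m (vm i) = (1 - 2 * b) • vm (m + i)) ∧
  (∀ m i : ℤ, σ.Gm m (vp i) = vm (m + i)) ∧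
  (∀ m i : ℤ, σ.Gp m (vm i) =
    (-(2 * a + (4 * b - 2) * (m : ℂ) + 2 * (i : ℂ))) • vp (m + i)) ∧
  (∀ m i : ℤ, σ.Gp m (vp i) = 0) ∧
  (∀ m i : ℤ, σ.Gm m (vm i) = 0)


theorem exists_vec_mem {W : Type} [AddCommGroup W] [Module ℂ W] (f : W →ₗ[ℂ] W)
    (v : ℤ → W) (a : ℂ) (hf : ∀ i : ℤ, f (v i) = (a + (i : ℂ)) • v i)
    (S : Submodule ℂ W) (hS : ∀ x ∈ S, f x ∈ S) (s : Finset ℤ) :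
    ∀ c : ℤ → ℂ, (∃ j ∈ s, c j ≠ 0) → ∑ j ∈ s, c j • v j ∈ S → ∃ i, v i ∈ S := by
  classical
  induction s using Finset.induction_on with
  | empty => rintro c ⟨j, hj, _⟩; simp at hj
  | insert i s hi ih =>
    intro c hc hx
    by_cases h : ∃ j ∈ s, c j ≠ 0
    · obtain ⟨j, hj, hcj⟩ := h
      refine ih (fun k => c k * ((k : ℂ) - i)) ⟨j, hj, mul_ne_zero hcj ?_⟩ ?_
      · rw [sub_ne_zero]
        intro h
        have : j = i := by exact_mod_cast h
        exact hi (this ▸ hj)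
      · have h1 := S.sub_mem (hS _ hx) (S.smul_mem (a + (i : ℂ)) hx)
        convert h1 using 1
        rw [Finset.sum_insert hi, map_add, map_sum, smul_add, map_smul, hf, Finset.smul_sum,
          smul_comm (a + (i : ℂ)), add_sub_add_left_eq_sub, ← Finset.sum_sub_distrib]
        refine Finset.sum_congr rfl fun k _ => ?_
        rw [map_smul, hf, smul_smul, smul_smul, ← sub_smul]
        congr 1
        ring
    · push Not at h
      rw [Finset.sum_insert hi, Finset.sum_eq_zero (fun k hk => by rw [h k hk, zero_smul]),
        add_zero] at hx
      have hci : c i ≠ 0 := by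
        obtain ⟨j, hj, hcj⟩ := hc
        rcases Finset.mem_insert.1 hj with rfl | hj
        · exact hcj
        · exact absurd (h j hj) hcj
      exact ⟨i, (S.smul_mem_iff hci).1 hx⟩

theorem exists_vec_mem_span {W : Type} [AddCommGroup W] [Module ℂ W] (f : W →ₗ[ℂ] W)
    (v : ℤ → W) (a : ℂ) (hf : ∀ i : ℤ, f (v i) = (a + (i : ℂ)) • v i)
    (S : Submodule ℂ W) (hS : ∀ x ∈ S, f x ∈ S) (x : W) (hx : x ∈ S) (hx0 : x ≠ 0)
    (hxs : x ∈ Submodule.span ℂ (Set.range v)) : ∃ i, v i ∈ S := by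
  obtain ⟨c, rfl⟩ := (Finsupp.mem_span_range_iff_exists_finsupp).1 hxs
  refine exists_vec_mem f v a hf S hS c.support c ?_ hx
  by_contra h
  push Not at h
  exact hx0 (Finset.sum_eq_zero fun k hk => by simp [h k hk])

theorem not_simple_of_set {W : Type} [AddCommGroup W] [Module ℂ W] (σ : RamondRep W)
    (e : Bool × ℤ → W) (he : LinearIndependent ℂ e)
    (hev : ∀ i, e (false, i) ∈ σ.even) (hod : ∀ i, e (true, i) ∈ σ.odd)
    (s : Set (Bool × ℤ)) (x y : Bool × ℤ) (hx : x ∈ s) (hy : y ∉ s)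
    (hL : ∀ m, ∀ z ∈ s, σ.L m (e z) ∈ Submodule.span ℂ (e '' s))
    (hH : ∀ m, ∀ z ∈ s, σ.H m (e z) ∈ Submodule.span ℂ (e '' s))
    (hP : ∀ m, ∀ z ∈ s, σ.Gp m (e z) ∈ Submodule.span ℂ (e '' s))
    (hM : ∀ m, ∀ z ∈ s, σ.Gm m (e z) ∈ Submodule.span ℂ (e '' s)) :
    ¬ σ.IsSimple := by
  have key : ∀ f : W →ₗ[ℂ] W, (∀ z ∈ s, f (e z) ∈ Submodule.span ℂ (e '' s)) →
      ∀ v ∈ Submodule.span ℂ (e '' s), f v ∈ Submodule.span ℂ (e '' s) := by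
    intro f hf v hv
    have : Submodule.span ℂ (e '' s) ≤ (Submodule.span ℂ (e '' s)).comap f := by
      rw [Submodule.span_le]
      rintro _ ⟨z, hz, rfl⟩
      exact hf z hz
    exact this hv
  intro hs
  have hxm : e x ∈ Submodule.span ℂ (e '' s) := Submodule.subset_span ⟨x, hx, rfl⟩
  have hgr : Submodule.span ℂ (e '' s) = (Submodule.span ℂ (e '' s) ⊓ σ.even) ⊔
      (Submodule.span ℂ (e '' s) ⊓ σ.odd) := by
    apply le_antisymm
    · rw [Submodule.span_le]
      rintro _ ⟨⟨p, i⟩, hz, rfl⟩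
      have hm : e (p, i) ∈ Submodule.span ℂ (e '' s) := Submodule.subset_span ⟨_, hz, rfl⟩
      cases p
      · exact Submodule.mem_sup_left ⟨hm, hev i⟩
      · exact Submodule.mem_sup_right ⟨hm, hod i⟩
    · exact sup_le inf_le_left inf_le_left
  rcases hs.2 (Submodule.span ℂ (e '' s)) ⟨⟨fun m => key _ (hL m), fun m => key _ (hH m),
    fun m => key _ (hP m), fun m => key _ (hM m)⟩, hgr⟩ with h | h
  · rw [h] at hxm
    exact he.ne_zero x (by simpa using hxm)
  · exact he.notMem_span_image hy (h ▸ Submodule.mem_top)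

theorem exists_int_ne (A B : ℂ) (h : B ≠ 0 ∨ A ≠ 0) : ∃ m : ℤ, A + B * (m : ℂ) ≠ 0 := by
  by_cases hA : A = 0
  · refine ⟨1, ?_⟩
    simp_all
  · exact ⟨0, by simpa using hA⟩

theorem stmt13 (a b : ℂ) (ha : (¬ ∃ k : ℤ, (k : ℂ) = a) ∨ a = 0)
    {W : Type} [AddCommGroup W] [Module ℂ W] (σ : RamondRep W)
    (vp vm : ℤ → W) (hRab : σ.IsRab vp vm a b) :
    ¬ σ.IsSimple ↔ (a = 0 ∧ b = 1) ∨ (a = 0 ∧ b = 1 / 2) := by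
  obtain ⟨-, hli, hsp, hev, hod, hLp, hLm, hHp, hHm, hMp, hPm, hPp, hMm⟩ := hRab
  constructor
  · intro hns
    by_contra hab
    have hane : ∀ k : ℤ, a ≠ 0 → a + (k : ℂ) ≠ 0 := by
      intro k h0 hk
      rcases ha with ha | ha
      · exact ha ⟨-k, by push_cast; linear_combination -hk⟩
      · exact h0 ha
    have hb1 : ∀ k : ℤ, b = 1 → a + (k : ℂ) ≠ 0 := fun k hb =>
      hane k fun h => hab (Or.inl ⟨h, hb⟩)
    have hb2 : ∀ k : ℤ, b = 1 / 2 → a + (k : ℂ) ≠ 0 := fun k hb =>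
      hane k fun h => hab (Or.inr ⟨h, hb⟩)
    apply hns
    refine ⟨?_, ?_⟩
    · intro ht
      have h1 := (ht 0 (vp 0)).2.2.2
      rw [hMp] at h1
      exact hli.ne_zero (true, 0) (by simpa using h1)
    · rintro S ⟨⟨hL, hH, hP, hM⟩, hg⟩
      by_cases hS : S = ⊥
      · exact Or.inl hS
      right
      have hpall : (∃ i, vp i ∈ S) → S = ⊤ := by
        rintro ⟨i, hi⟩
        have hmall : ∀ k, vm k ∈ S := by
          intro k
          have := hM (k - i) _ hi
          rwa [hMp, sub_add_cancel] at this
        have hpa : ∀ k, vp k ∈ S := by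
          intro k
          obtain ⟨m, hm⟩ := exists_int_ne (2 * (a + (k : ℂ))) (4 * b - 4) (by
            by_cases hb : b = 1
            · exact Or.inr (mul_ne_zero two_ne_zero (hb1 k hb))
            · left
              intro h
              exact hb (by linear_combination h / 4))
          have := hP m _ (hmall (k - m))
          rw [hPm, add_sub_cancel, S.smul_mem_iff] at this
          · exact this
          · push_cast
            intro h
            exact hm (by linear_combination -h)
        rw [eq_top_iff, ← hsp, Submodule.span_le]
        rintro _ (⟨k, rfl⟩ | ⟨k, rfl⟩)
        · exact hpa k
        · exact hmall k
      have hmall : (∃ i, vm i ∈ S) → S = ⊤ := by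
        rintro ⟨i, hi⟩
        apply hpall
        obtain ⟨m, hm⟩ := exists_int_ne (2 * (a + (i : ℂ))) (4 * b - 2) (by
          by_cases hb : b = 1 / 2
          · exact Or.inr (mul_ne_zero two_ne_zero (hb2 i hb))
          · left
            intro h
            exact hb (by linear_combination h / 4))
        have := hP m _ hi
        rw [hPm, S.smul_mem_iff] at this
        · exact ⟨_, this⟩
        · intro h
          exact hm (by linear_combination -h)
      by_cases h1 : S ⊓ σ.even = ⊥
      · have h2 : S ⊓ σ.odd ≠ ⊥ := by
          intro h2
          rw [h1, h2, sup_bot_eq] at hg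
          exact hS hg
        obtain ⟨x, hx, hx0⟩ := Submodule.exists_mem_ne_zero_of_ne_bot h2
        refine hmall (exists_vec_mem_span (σ.L 0) vm a ?_ S (hL 0) x hx.1 hx0 (hod ▸ hx.2))
        intro i
        simp [hLm]
      · obtain ⟨x, hx, hx0⟩ := Submodule.exists_mem_ne_zero_of_ne_bot h1
        refine hpall (exists_vec_mem_span (σ.L 0) vp a ?_ S (hL 0) x hx.1 hx0 (hev ▸ hx.2))
        intro i
        simp [hLp]
  · have hE : ∀ i, vp i ∈ σ.even := fun i => hev ▸ Submodule.subset_span ⟨i, rfl⟩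
    have hO : ∀ i, vm i ∈ σ.odd := fun i => hod ▸ Submodule.subset_span ⟨i, rfl⟩
    rintro (⟨rfl, rfl⟩ | ⟨rfl, rfl⟩)
    · set T := Submodule.span ℂ
        ((fun x : Bool × ℤ => if x.1 then vm x.2 else vp x.2) '' {(false, 0)}ᶜ) with hT
      have hmT : ∀ k, vm k ∈ T := fun k =>
        Submodule.subset_span ⟨(true, k), by simp, by simp⟩
      have hpT : ∀ (c : ℂ) k, ((k : ℤ) = 0 → c = 0) → c • vp k ∈ T := by
        intro c k h
        by_cases hk : k = 0
        · rw [h hk, zero_smul]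
          exact T.zero_mem
        · exact T.smul_mem _ (Submodule.subset_span ⟨(false, k), by simpa using hk, by simp⟩)
      refine not_simple_of_set σ _ hli (by simpa using hE) (by simpa using hO) {(false, 0)}ᶜ
        (true, 0) (false, 0) (by simp) (by simp) ?_ ?_ ?_ ?_ <;> rintro m ⟨_ | _, i⟩ hz <;>
        simp only [Bool.false_eq_true, if_true, if_false, ← hT]
      · rw [hLp]
        refine hpT _ _ fun h => ?_
        have h' : (m : ℂ) + i = 0 := by exact_mod_cast h
        linear_combination h'
      · rw [hLm]
        exact T.smul_mem _ (hmT _)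
      · rw [hHp]
        exact hpT _ _ fun h => by norm_num
      · rw [hHm]
        exact T.smul_mem _ (hmT _)
      · rw [hPp]
        exact T.zero_mem
      · rw [hPm]
        refine hpT _ _ fun h => ?_
        have h' : (m : ℂ) + i = 0 := by exact_mod_cast h
        linear_combination -2 * h'
      · rw [hMp]
        exact hmT _
      · rw [hMm]
        exact T.zero_mem
    · refine not_simple_of_set σ _ hli (by simpa using hE) (by simpa using hO) {(true, 0)}
        (true, 0) (false, 0) (by simp) (by simp) ?_ ?_ ?_ ?_ <;> rintro m _ rfl <;>
        simp [hLm, hHm, hPm, hMm, show (4 * 2⁻¹ - 2 : ℂ) = 0 by norm_num]
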